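/- arXiv:2002.01130 — 4 statements merged into one kernel-verified Lean document; each statement's English description precedes it below -/
import Mathlib

section
/- Let k be a commutative ring with unity, N ≥ 2 an integer, and q ∈ k a primitive N-th root of unity. For all integers l, m with 0 ≤ l ≤ m ≤ N and (l,m) ≠ (0,N), (N,N), there exists a unique element c ∈ k such that [l]!·[m−l]!·c = [m]!. (Hence the q-binomial coefficient [m choose l] = [m]!/([l]![m−l]!), a priori defined in the total quotient ring of k, lies in k.) -/
/-- The `q`-integer `[m] = 1 + q + ⋯ + q^{m-1}`. -/
def qInt {k : Type*} [CommRing k] (q : k) (m : ℕ) : k := ∑ i ∈ Finset.range m, q ^ i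

/-- The `q`-factorial `[m]! = [m][m-1]⋯[1]`, with `[0]! = 1`. -/
def qFact {k : Type*} [CommRing k] (q : k) (m : ℕ) : k := ∏ i ∈ Finset.range m, qInt q (i + 1)

/-!
The `q`-Pascal recursion defines the `q`-binomial coefficients over any commutative ring, and since
`[a + b] = [a] + q ^ a [b]`, they satisfy the factorial formula without any division. Uniqueness is
cancellation: `[i]` divides `q ^ i - 1`, so it is a non-zero-divisor for `0 < i < N`, and the
excluded pairs `(l, m)` are exactly those for which `[l]! [m - l]!` has the factor `[N] = 0`.
-/

section

open scoped nonZeroDivisors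

variable {k : Type*} [CommRing k] (q : k)

theorem qInt_add (a b : ℕ) : qInt q (a + b) = qInt q a + q ^ a * qInt q b := by
  simp only [qInt, Finset.sum_range_add, Finset.mul_sum, pow_add]

theorem qInt_mul_sub_one (n : ℕ) : qInt q n * (q - 1) = q ^ n - 1 :=
  geom_sum_mul q n

@[simp]
theorem qFact_zero : qFact q 0 = 1 :=
  Finset.prod_range_zero _

theorem qFact_succ (n : ℕ) : qFact q (n + 1) = qFact q n * qInt q (n + 1) :=
  Finset.prod_range_succ _ n

/-- The `q`-binomial coefficient `[n choose l]`, defined by the `q`-Pascal recursion, so that it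
makes sense in every commutative ring; it is `0` for `n < l`. -/
def qBinom : ℕ → ℕ → k
  | _, 0 => 1
  | 0, _ + 1 => 0
  | n + 1, l + 1 => qBinom n l + q ^ (l + 1) * qBinom n (l + 1)

@[simp]
theorem qBinom_zero_right (n : ℕ) : qBinom q n 0 = 1 := by
  rw [qBinom]

theorem qBinom_succ_succ (n l : ℕ) :
    qBinom q (n + 1) (l + 1) = qBinom q n l + q ^ (l + 1) * qBinom q n (l + 1) := by
  rw [qBinom]

theorem qBinom_eq_zero_of_lt {n l : ℕ} (h : n < l) : qBinom q n l = 0 := by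
  induction n generalizing l with
  | zero =>
    obtain ⟨l, rfl⟩ := Nat.exists_eq_add_one.mpr h
    rw [qBinom]
  | succ n ih =>
    obtain ⟨l, rfl⟩ := Nat.exists_eq_add_one.mpr (Nat.zero_lt_of_lt h)
    rw [qBinom_succ_succ, ih (by omega), ih (by omega), mul_zero, add_zero]

@[simp]
theorem qBinom_self (n : ℕ) : qBinom q n n = 1 := by
  induction n with
  | zero => exact qBinom_zero_right q 0
  | succ n ih =>
    rw [qBinom_succ_succ, ih, qBinom_eq_zero_of_lt q n.lt_succ_self, mul_zero, add_zero]

theorem qFact_mul_qFact_mul_qBinom (a b : ℕ) :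
    qFact q a * qFact q b * qBinom q (a + b) a = qFact q (a + b) := by
  induction a generalizing b with
  | zero => simp
  | succ a iha =>
    induction b with
    | zero => simp
    | succ b ihb =>
      have pascal : qBinom q (a + 1 + b + 1) (a + 1) =
          qBinom q (a + 1 + b) a + q ^ (a + 1) * qBinom q (a + 1 + b) (a + 1) :=
        qBinom_succ_succ q (a + 1 + b) a
      have smaller_left :
          qFact q a * qFact q (b + 1) * qBinom q (a + 1 + b) a = qFact q (a + 1 + b) := by
        rw [Nat.add_right_comm]
        exact iha (b + 1)
      calc qFact q (a + 1) * qFact q (b + 1) * qBinom q (a + 1 + b + 1) (a + 1)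
          = qInt q (a + 1) * (qFact q a * qFact q (b + 1) * qBinom q (a + 1 + b) a) +
              q ^ (a + 1) * qInt q (b + 1) *
                (qFact q (a + 1) * qFact q b * qBinom q (a + 1 + b) (a + 1)) := by
            rw [pascal, qFact_succ q a, qFact_succ q b]
            ring
        _ = qFact q (a + 1 + b) * (qInt q (a + 1) + q ^ (a + 1) * qInt q (b + 1)) := by
            rw [smaller_left, ihb]
            ring
        _ = qFact q (a + 1 + b + 1) := by
            rw [← qInt_add, qFact_succ q (a + 1 + b), Nat.add_assoc (a + 1)]

variable {q}

theorem qInt_mem_nonZeroDivisors {n : ℕ} (h : q ^ n - 1 ∈ k⁰) : qInt q n ∈ k⁰ := by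
  rw [← qInt_mul_sub_one] at h
  exact (mul_mem_nonZeroDivisors.mp h).1

theorem qFact_mem_nonZeroDivisors {n : ℕ} (h : ∀ i, 1 ≤ i → i ≤ n → qInt q i ∈ k⁰) :
    qFact q n ∈ k⁰ :=
  prod_mem fun i hi => h (i + 1) i.succ_pos (Finset.mem_range.mp hi)

theorem qBinom_existsUnique_general {l m : ℕ} (hlm : l ≤ m)
    (h : ∀ i, 1 ≤ i → i ≤ max l (m - l) → qInt q i ∈ k⁰) :
    ∃! c : k, qFact q l * qFact q (m - l) * c = qFact q m := by
  have regular : qFact q l * qFact q (m - l) ∈ k⁰ :=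
    mul_mem (qFact_mem_nonZeroDivisors fun i hi hil => h i hi (le_max_of_le_left hil))
      (qFact_mem_nonZeroDivisors fun i hi hil => h i hi (le_max_of_le_right hil))
  have formula : qFact q l * qFact q (m - l) * qBinom q m l = qFact q m := by
    simpa only [Nat.add_sub_cancel' hlm] using qFact_mul_qFact_mul_qBinom q l (m - l)
  exact ⟨qBinom q m l, formula, fun c hc =>
    (mul_cancel_left_mem_nonZeroDivisors regular).mp (hc.trans formula.symm)⟩

end

/-- if `q` is a primitive `N`-th root of unity in a commutative ring `k`,
then for `0 ≤ l ≤ m ≤ N` with `(l,m) ≠ (0,N), (N,N)` there exists a unique `c ∈ k` with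
`[l]! ⬝ [m-l]! ⬝ c = [m]!`; i.e. the `q`-binomial coefficient `[m choose l]` lies in `k`. -/
theorem qBinom_existsUnique
    {k : Type*} [CommRing k] (N : ℕ) (hN : 2 ≤ N) (q : k)
    (hq1 : q ^ N = 1)
    (hq2 : ∀ l : ℕ, 1 ≤ l → l ≤ N - 1 → q ^ l - 1 ∈ nonZeroDivisors k)
    (l m : ℕ) (hlm : l ≤ m) (hmN : m ≤ N)
    (h0 : ¬(l = 0 ∧ m = N)) (h1 : ¬(l = N ∧ m = N)) :
    ∃! c : k, qFact q l * qFact q (m - l) * c = qFact q m := by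
  exact qBinom_existsUnique_general hlm fun i hi him =>
    qInt_mem_nonZeroDivisors (hq2 i hi (by omega))
end

section
/- Let k be a commutative ring with unity, N ≥ 2 an integer, q ∈ k a primitive N-th root of unity, U and V k-modules, and d_U, d_V k-linear endomorphisms of U and V respectively with d_U^N = 0 and d_V^N = 0. For each s ∈ ℤ define the k-linear operator D_s on Hom_k(U,V) by D_s(g) = d_V∘g − q^s·(g∘d_U). Then for every r ∈ ℤ the N-fold composite D_{r+N−1}∘⋯∘D_{r+1}∘D_r is the zero operator on Hom_k(U,V). (That is, the Hom-complex Hom^{•q}(U,V) of two N-differential graded k-modules is again an N-differential graded k-module.) -/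
/-- The differential of the Hom-complex `Hom^{•q}(U,V)` in degree `s`:
`D_s(g) = d_V ∘ g − q^s ⬝ (g ∘ d_U)`, where `q = ↑u` is a unit (so `q^s` makes sense
for `s : ℤ`). -/
def homDiff {k : Type*} [CommRing k] {U V : Type*} [AddCommGroup U] [AddCommGroup V]
    [Module k U] [Module k V] (u : kˣ) (dU : U →ₗ[k] U) (dV : V →ₗ[k] V)
    (s : ℤ) (g : U →ₗ[k] V) : U →ₗ[k] V :=
  dV ∘ₗ g - ((u ^ s : kˣ) : k) • (g ∘ₗ dU)

/-! The operators `g ↦ d_V ∘ g` and `g ↦ g ∘ d_U` commute, so the composite of the `D_{r+i}` is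
the value at this pair of the homogeneous polynomial `∏_{i<N} (x - c q^i)` with `c = q^r y`.
As a polynomial in `x` it is invariant under `x ↦ q x`, because `q^N = 1`; hence its coefficient
`p_j` satisfies `(q^j - 1) p_j = 0` and vanishes for `0 < j < N`. Since `c` is a root, the product
is `x^N - c^N`, and the composite sends `f` to `d_V^N ∘ f - f ∘ d_U^N`. -/

/-- A primitive `N`-th root of unity over an arbitrary commutative ring: `q ^ N = 1`, and
`q ^ l - 1` is a non-zero-divisor for `0 < l < N`. Mathlib's `IsPrimitiveRoot` only asks for
`q ^ l ≠ 1`, which is weaker in the presence of zero divisors. -/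
structure IsRegularPrimitiveRoot {R : Type*} [CommRing R] (q : R) (N : ℕ) : Prop where
  pow_eq_one : q ^ N = 1
  pow_sub_one_mem : ∀ l, 0 < l → l < N → q ^ l - 1 ∈ nonZeroDivisors R

section Polynomials

open Polynomial

variable {R : Type*} [CommRing R] {q : R} {N : ℕ}

theorem IsRegularPrimitiveRoot.polynomialC (hq : IsRegularPrimitiveRoot q N) :
    IsRegularPrimitiveRoot (C q) N where
  pow_eq_one := by rw [← C_pow, hq.pow_eq_one, C_1]
  pow_sub_one_mem l hl hlN := by
    rw [← C_pow, ← C_1, ← C_sub]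
    exact mem_nonZeroDivisors_of_leadingCoeff (by
      rw [leadingCoeff_C]
      exact hq.pow_sub_one_mem l hl hlN)

theorem coeff_eq_zero_of_comp_C_mul_X_eq_self {P : R[X]} (hP : P.comp (C q * X) = P) {j : ℕ}
    (hj : q ^ j - 1 ∈ nonZeroDivisors R) : P.coeff j = 0 := by
  have hcoeff : P.coeff j * q ^ j = P.coeff j := by rw [← comp_C_mul_X_coeff, hP]
  rw [← mul_right_mem_nonZeroDivisors_eq_zero_iff hj, mul_sub, hcoeff, mul_one, sub_self]

-- Substituting `qX` for `X` permutes the factors cyclically, up to the factor `q ^ N = 1`.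
theorem prod_X_sub_C_mul_pow_comp_C_mul_X (hq : q ^ N = 1) (c : R) :
    (∏ i ∈ Finset.range N, (X - C (c * q ^ i))).comp (C q * X) =
      ∏ i ∈ Finset.range N, (X - C (c * q ^ i)) := by
  have hcyclic : ∏ i ∈ Finset.range N, (C q * X - C (c * q ^ i)) =
      ∏ i ∈ Finset.range N, (C q * X - C (c * q ^ (i + 1))) := by
    cases N with
    | zero => rfl
    | succ n => rw [Finset.prod_range_succ', Finset.prod_range_succ, hq, pow_zero]
  calc (∏ i ∈ Finset.range N, (X - C (c * q ^ i))).comp (C q * X)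
      = ∏ i ∈ Finset.range N, (C q * X - C (c * q ^ i)) := by
        simp only [prod_comp, sub_comp, X_comp, C_comp]
    _ = ∏ i ∈ Finset.range N, C q * (X - C (c * q ^ i)) := by
        rw [hcyclic]
        refine Finset.prod_congr rfl fun i _ => ?_
        simp only [pow_succ, C_mul]
        ring
    _ = ∏ i ∈ Finset.range N, (X - C (c * q ^ i)) := by
        rw [Finset.prod_mul_distrib, Finset.prod_const, Finset.card_range, ← C_pow, hq, C_1,
          one_mul]

theorem IsRegularPrimitiveRoot.eq_X_pow_add_C_of_comp_C_mul_X_eq_self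
    (hq : IsRegularPrimitiveRoot q N) (hN : N ≠ 0) {P : R[X]} (hmonic : P.Monic)
    (hdeg : P.natDegree = N) (hinv : P.comp (C q * X) = P) :
    P = X ^ N + C (P.coeff 0) := by
  subst hdeg
  ext j
  rw [coeff_add, coeff_X_pow, coeff_C]
  rcases Nat.eq_zero_or_pos j with rfl | hj
  · rw [if_neg hN.symm, if_pos rfl, zero_add]
  rw [if_neg hj.ne', add_zero]
  rcases lt_trichotomy j P.natDegree with hlt | rfl | hgt
  · rw [coeff_eq_zero_of_comp_C_mul_X_eq_self hinv (hq.pow_sub_one_mem j hj hlt),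
      if_neg hlt.ne]
  · rw [hmonic.coeff_natDegree, if_pos rfl]
  · rw [coeff_eq_zero_of_natDegree_lt hgt, if_neg hgt.ne']

theorem IsRegularPrimitiveRoot.prod_X_sub_C_mul_pow (hq : IsRegularPrimitiveRoot q N)
    (hN : N ≠ 0) (c : R) :
    ∏ i ∈ Finset.range N, (X - C (c * q ^ i)) = X ^ N - C (c ^ N) := by
  nontriviality R
  set P := ∏ i ∈ Finset.range N, (X - C (c * q ^ i)) with hP
  have hdeg : P.natDegree = N := by
    rw [hP, natDegree_finsetProd_X_sub_C_eq_card, Finset.card_range]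
  have hbinomial : P = X ^ N + C (P.coeff 0) :=
    hq.eq_X_pow_add_C_of_comp_C_mul_X_eq_self hN (monic_prod_X_sub_C _ _) hdeg
      (prod_X_sub_C_mul_pow_comp_C_mul_X hq.pow_eq_one c)
  have hroot : P.eval c = 0 := by
    rw [hP, eval_prod]
    exact Finset.prod_eq_zero (Finset.mem_range.2 (Nat.pos_of_ne_zero hN)) (by simp)
  have hconst : P.coeff 0 = -c ^ N := by
    rw [hbinomial, eval_add, eval_pow, eval_X, eval_C] at hroot
    exact eq_neg_of_add_eq_zero_right hroot
  rw [hbinomial, hconst, C_neg, sub_eq_add_neg]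

end Polynomials

section CommutingOperators

open Polynomial

theorem foldl_range_smul_eq_prod_smul {S E M : Type*} [CommMonoid S] [Monoid E] [MulAction E M]
    (φ : S →* E) (s : ℕ → S) (n : ℕ) (m : M) :
    (List.range n).foldl (fun x i => φ (s i) • x) m = φ (∏ i ∈ Finset.range n, s i) • m := by
  induction n with
  | zero => simp
  | succ n ih =>
    rw [List.range_succ, List.foldl_append, ih, Finset.prod_range_succ_comm, map_mul, mul_smul]
    rfl

/-- Evaluation of bivariate polynomials at a commuting pair of elements of a possibly
noncommutative algebra: the outer variable is sent to `a`, the inner one to `b`. -/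
noncomputable def commutingEval (k : Type*) {A : Type*} [CommRing k] [Ring A] [Algebra k A]
    {a b : A} (h : Commute a b) :
    k[X][X] →ₐ[k] A :=
  eval₂AlgHom (aeval b) a fun _ =>
    (Algebra.commute_of_mem_adjoin_singleton_of_commute (aeval_mem_adjoin_singleton k b) h).symm

section Eval

variable {k A : Type*} [CommRing k] [Ring A] [Algebra k A] {a b : A} (h : Commute a b)

theorem commutingEval_X : commutingEval k h X = a :=
  eval₂_X _ _

theorem commutingEval_C (p : k[X]) : commutingEval k h (C p) = aeval b p :=
  eval₂_C _ _

end Eval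

-- Taking `c = X` in `k[X]` turns the factorization of `X ^ N - c ^ N` into a bivariate identity,
-- which can be evaluated at `a` and `b`.
theorem IsRegularPrimitiveRoot.foldl_range_sub_smul {k M : Type*} [CommRing k] [AddCommGroup M]
    [Module k M] {q : k} {N : ℕ} (hq : IsRegularPrimitiveRoot q N) (hN : N ≠ 0)
    {a b : Module.End k M} (h : Commute a b) (m : M) :
    (List.range N).foldl (fun x i => (a - q ^ i • b) x) m = (a ^ N - b ^ N) m := by
  have hfactor (i : ℕ) : commutingEval k h (X - C (X * C q ^ i)) = a - q ^ i • b := by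
    have hsmul : (X * C q ^ i : k[X]) = q ^ i • X := by rw [smul_eq_C_mul, C_pow, mul_comm]
    rw [hsmul, map_sub, commutingEval_X, commutingEval_C, map_smul, aeval_X]
  have hbinomial : commutingEval k h (X ^ N - C (X ^ N)) = a ^ N - b ^ N := by
    rw [map_sub, map_pow, commutingEval_X, commutingEval_C, map_pow, aeval_X]
  simp only [← hfactor, ← hbinomial, ← hq.polynomialC.prod_X_sub_C_mul_pow hN X]
  exact foldl_range_smul_eq_prod_smul (commutingEval k h).toMonoidHom _ N m

end CommutingOperators

section HomComplex

variable {k : Type*} [CommRing k] {U V : Type*} [AddCommGroup U] [AddCommGroup V] [Module k U]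
  [Module k V] (dU : U →ₗ[k] U) (dV : V →ₗ[k] V)

theorem compRight_pow_apply (n : ℕ) (f : U →ₗ[k] V) :
    ((LinearMap.compRight k dV : Module.End k (U →ₗ[k] V)) ^ n) f = (dV ^ n) ∘ₗ f := by
  induction n with
  | zero => rfl
  | succ n ih => rw [pow_succ', pow_succ', Module.End.mul_apply, ih]; rfl

theorem lcomp_pow_apply (n : ℕ) (f : U →ₗ[k] V) :
    ((LinearMap.lcomp k V dU : Module.End k (U →ₗ[k] V)) ^ n) f = f ∘ₗ (dU ^ n) := by
  induction n with
  | zero => rfl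
  | succ n ih => rw [pow_succ', pow_succ, Module.End.mul_apply, ih]; rfl

theorem commute_compRight_lcomp :
    Commute (LinearMap.compRight k dV : Module.End k (U →ₗ[k] V)) (LinearMap.lcomp k V dU) :=
  rfl

theorem homDiff_add_natCast (u : kˣ) (r : ℤ) (i : ℕ) (g : U →ₗ[k] V) :
    homDiff u dU dV (r + i) g =
      (LinearMap.compRight k dV - (u : k) ^ i • ((u ^ r : kˣ) : k) • LinearMap.lcomp k V dU :
        Module.End k (U →ₗ[k] V)) g := by
  rw [homDiff, zpow_add, zpow_natCast, mul_comm, Units.val_mul, Units.val_pow_eq_pow_val,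
    mul_smul]
  rfl

theorem IsRegularPrimitiveRoot.foldl_range_homDiff {u : kˣ} {N : ℕ}
    (hu : IsRegularPrimitiveRoot (u : k) N) (hN : N ≠ 0) (r : ℤ) (f : U →ₗ[k] V) :
    (List.range N).foldl (fun g (i : ℕ) => homDiff u dU dV (r + i) g) f =
      (dV ^ N) ∘ₗ f - f ∘ₗ (dU ^ N) := by
  have huN : u ^ N = 1 := Units.ext hu.pow_eq_one
  have hur : ((u ^ r : kˣ) : k) ^ N = 1 := by
    rw [← Units.val_pow_eq_pow_val, ← zpow_natCast, zpow_comm, zpow_natCast, huN, one_zpow,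
      Units.val_one]
  simp only [homDiff_add_natCast]
  rw [hu.foldl_range_sub_smul hN ((commute_compRight_lcomp dU dV).smul_right _), smul_pow, hur,
    one_smul, LinearMap.sub_apply, compRight_pow_apply, lcomp_pow_apply]

end HomComplex

/-- if `d_U^N = 0` and `d_V^N = 0`, then for every `r : ℤ` the `N`-fold
composite `D_{r+N−1}∘⋯∘D_{r+1}∘D_r` is the zero operator on `Hom_k(U,V)`; i.e. the
Hom-complex of two `N`-differential graded `k`-modules is again `N`-differential. -/
theorem homDiff_iterate_N_eq_zero
    {k : Type*} [CommRing k] (N : ℕ) (hN : 2 ≤ N) (q : k)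
    (hq1 : q ^ N = 1)
    (hq2 : ∀ l : ℕ, 1 ≤ l → l ≤ N - 1 → q ^ l - 1 ∈ nonZeroDivisors k)
    (u : kˣ) (hu : (u : k) = q)
    {U V : Type*} [AddCommGroup U] [AddCommGroup V] [Module k U] [Module k V]
    (dU : U →ₗ[k] U) (dV : V →ₗ[k] V)
    (hdU : dU ^ N = 0) (hdV : dV ^ N = 0)
    (r : ℤ) (f : U →ₗ[k] V) :
    (List.range N).foldl (fun g i => homDiff u dU dV (r + (i : ℤ)) g) f = 0 := by
  subst hu
  have hu : IsRegularPrimitiveRoot (u : k) N :=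
    ⟨hq1, fun l hl hlN => hq2 l hl (Nat.le_sub_one_of_lt hlN)⟩
  -- The list folded over is `List.range N` coerced to `List ℤ`, which unfolds to a monadic bind.
  have hcast : (List.range N >>= fun i => pure (i : ℤ)) = (List.range N).map ((↑) : ℕ → ℤ) :=
    bind_pure_comp _ _
  rw [hcast, List.foldl_map, hu.foldl_range_homDiff dU dV (by lia), hdV, hdU, LinearMap.zero_comp,
    LinearMap.comp_zero, sub_zero]
end

section
/- Let k be a commutative ring with unity, N ≥ 2 an integer, and q ∈ k a primitive N-th root of unity. Let U = (U^i)_{i∈ℤ} and V = (V^i)_{i∈ℤ} be N-differential graded k-modules, i.e. ℤ-graded k-modules with degree-1 k-linear maps d_U, d_V whose N-fold iterates vanish (d_U^{(N)} = 0 and d_V^{(N)} = 0). Let U⊗^{•q}V be the graded k-module with (U⊗^{•q}V)^n = ⊕_{r+s=n} U^r ⊗_k V^s and degree-1 differential d determined on pure tensors by d(u⊗v) = d_U(u)⊗v + q^r·u⊗d_V(v) for u ∈ U^r. Then the N-fold iterate of d vanishes: d^{(N)} = 0, i.e. U⊗^{•q}V is an N-differential graded k-module. -/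
/-! The differential is a sum `A + B`, where `A = d_U ⊗ 1` and `B` is `1 ⊗ d_V` twisted by `q ^ r`;
the twist makes them `q`-commute: `B A = q A B`. By the `q`-binomial theorem `(A + B) ^ N` is the
sum of the terms `[N, a] A ^ a B ^ b` with `a + b = N`, where `[N, a]` is the Gaussian binomial
coefficient. At a primitive `N`-th root of unity all the inner coefficients vanish, because
`(q ^ a - 1) [N, a] = (q ^ N - 1) [N - 1, a - 1] = 0`. Hence `(A + B) ^ N = A ^ N + B ^ N`. -/

open scoped TensorProduct DirectSum

/-- Transport a graded component along an equality of degrees. -/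
def castLM {k : Type*} [CommRing k] {X : ℤ → Type*} [∀ i, AddCommGroup (X i)]
    [∀ i, Module k (X i)] {i j : ℤ} (h : i = j) : X i →ₗ[k] X j := by
  subst h; exact LinearMap.id

/-- The `l`-fold iterate `d^{(l),i} : X^i → X^{i+l}` of a degree-1 family of maps. -/
def dpow {k : Type*} [CommRing k] {X : ℤ → Type*} [∀ i, AddCommGroup (X i)]
    [∀ i, Module k (X i)] (d : ∀ i : ℤ, X i →ₗ[k] X (i + 1)) :
    (l : ℕ) → (i : ℤ) → (X i →ₗ[k] X (i + l))
  | 0, i => castLM (by simp)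
  | l + 1, i => castLM (by push_cast; ring) ∘ₗ (dpow d l (i + 1)) ∘ₗ d i

/-- The differential of the twisted tensor product `U ⊗^{•q} V` on the bigraded
direct sum `⨁_{(r,s)} U^r ⊗ V^s`, given on the `(r,s)` component by
`u⊗v ↦ d_U(u)⊗v + q^r ⬝ u⊗d_V(v)`. -/
noncomputable def tensorDiff {k : Type*} [CommRing k] (u : kˣ)
    (U V : ℤ → Type*) [∀ i, AddCommGroup (U i)] [∀ i, Module k (U i)]
    [∀ i, AddCommGroup (V i)] [∀ i, Module k (V i)]
    (dU : ∀ i : ℤ, U i →ₗ[k] U (i + 1)) (dV : ∀ i : ℤ, V i →ₗ[k] V (i + 1)) :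
    (⨁ p : ℤ × ℤ, U p.1 ⊗[k] V p.2) →ₗ[k] (⨁ p : ℤ × ℤ, U p.1 ⊗[k] V p.2) :=
  DirectSum.toModule k (ℤ × ℤ) _ (fun p =>
    ((DirectSum.lof k (ℤ × ℤ) (fun p : ℤ × ℤ => U p.1 ⊗[k] V p.2) (p.1 + 1, p.2)) ∘ₗ
      (TensorProduct.map (dU p.1) LinearMap.id))
    + ((u ^ p.1 : kˣ) : k) •
      ((DirectSum.lof k (ℤ × ℤ) (fun p : ℤ × ℤ => U p.1 ⊗[k] V p.2) (p.1, p.2 + 1)) ∘ₗ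
        (TensorProduct.map LinearMap.id (dV p.2))))

section QBinomial

/-- The Gaussian binomial coefficient `[n, m]_q`, defined for every `q` in a semiring by the Pascal
recursion `[n + 1, m + 1]_q = [n, m]_q + q ^ (m + 1) [n, m + 1]_q`. It provides the coefficients of
the `q`-binomial theorem. -/
def qChoose {R : Type*} [Semiring R] (q : R) : ℕ → ℕ → R
  | _, 0 => 1
  | 0, _ + 1 => 0
  | n + 1, m + 1 => qChoose q n m + q ^ (m + 1) * qChoose q n (m + 1)

section Semiring

variable {R : Type*} [Semiring R] (q : R)

@[simp]
theorem qChoose_zero_right (n : ℕ) : qChoose q n 0 = 1 := by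
  cases n <;> rfl

theorem qChoose_succ_succ (n m : ℕ) :
    qChoose q (n + 1) (m + 1) = qChoose q n m + q ^ (m + 1) * qChoose q n (m + 1) :=
  rfl

theorem qChoose_eq_zero_of_lt {n m : ℕ} (h : n < m) : qChoose q n m = 0 := by
  induction n generalizing m with
  | zero =>
    obtain ⟨m, rfl⟩ := Nat.exists_eq_add_one.mpr h
    rfl
  | succ n ih =>
    obtain ⟨m, rfl⟩ := Nat.exists_eq_add_one.mpr (Nat.zero_lt_of_lt h)
    rw [qChoose_succ_succ, ih (by lia), ih (by lia), mul_zero, add_zero]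

@[simp]
theorem qChoose_self (n : ℕ) : qChoose q n n = 1 := by
  induction n with
  | zero => rfl
  | succ n ih =>
    rw [qChoose_succ_succ, ih, qChoose_eq_zero_of_lt q n.lt_succ_self, mul_zero, add_zero]

end Semiring

theorem qChoose_succ_succ_mul_pow_sub_one {R : Type*} [CommRing R] (q : R) (n m : ℕ) :
    qChoose q (n + 1) (m + 1) * (q ^ (m + 1) - 1) = (q ^ (n + 1) - 1) * qChoose q n m := by
  induction n generalizing m with
  | zero => cases m <;> simp [qChoose]
  | succ n ih =>
    rw [qChoose_succ_succ q (n + 1) m]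
    cases m with
    | zero =>
      simp only [qChoose_zero_right]
      have h := ih 0
      rw [qChoose_zero_right] at h
      linear_combination q * h
    | succ m =>
      linear_combination q ^ (m + 2) * ih (m + 1) + q * ih m
        - q * (q ^ (n + 1) - 1) * qChoose_succ_succ q n m

theorem qChoose_eq_zero_of_pow_eq_one {R : Type*} [CommRing R] {q : R} {n m : ℕ}
    (hq : q ^ n = 1) (hqm : q ^ m - 1 ∈ nonZeroDivisors R) (hm : m ≠ 0) (hmn : m < n) :
    qChoose q n m = 0 := by
  obtain ⟨m, rfl⟩ := Nat.exists_eq_add_one_of_ne_zero hm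
  obtain ⟨n, rfl⟩ := Nat.exists_eq_add_one_of_ne_zero (Nat.ne_zero_of_lt hmn)
  rw [← mul_right_mem_nonZeroDivisors_eq_zero_iff hqm, qChoose_succ_succ_mul_pow_sub_one, hq,
    sub_self, zero_mul]

/-- `A` and `B` `q`-commute if `B A = q A B`. The order is chosen so that the `q`-binomial theorem
`QCommute.add_pow` expands `(A + B) ^ n` into monomials `A ^ a B ^ b`. -/
def QCommute {R E : Type*} [Mul E] [SMul R E] (q : R) (A B : E) : Prop :=
  B * A = q • (A * B)

namespace QCommute

protected theorem eq {R E : Type*} [Mul E] [SMul R E] {q : R} {A B : E} (h : QCommute q A B) :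
    B * A = q • (A * B) :=
  h

open Finset.HasAntidiagonal (antidiagonal mem_antidiagonal)

variable {R E : Type*} [Semiring E] {A B : E}

theorem mul_pow_left [CommSemiring R] [Algebra R E] {q : R}
    (h : QCommute q A B) (n : ℕ) : B * A ^ n = q ^ n • (A ^ n * B) := by
  induction n with
  | zero => simp
  | succ n ih =>
    rw [pow_succ, ← mul_assoc, ih, smul_mul_assoc, mul_assoc, h.eq, mul_smul_comm, smul_smul,
      ← mul_assoc, ← pow_succ]

protected theorem add_pow [CommSemiring R] [Algebra R E] {q : R}
    (h : QCommute q A B) (n : ℕ) :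
    (A + B) ^ n = ∑ p ∈ antidiagonal n, qChoose q n p.1 • (A ^ p.1 * B ^ p.2) := by
  induction n with
  | zero => simp
  | succ n ih =>
    have hA (p : ℕ × ℕ) : A * (qChoose q n p.1 • (A ^ p.1 * B ^ p.2))
        = qChoose q n p.1 • (A ^ (p.1 + 1) * B ^ p.2) := by
      rw [mul_smul_comm, ← mul_assoc, ← pow_succ']
    have hB (p : ℕ × ℕ) : B * (qChoose q n p.1 • (A ^ p.1 * B ^ p.2))
        = (q ^ p.1 * qChoose q n p.1) • (A ^ p.1 * B ^ (p.2 + 1)) := by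
      rw [mul_smul_comm, ← mul_assoc, h.mul_pow_left, smul_mul_assoc, mul_assoc,
        ← pow_succ', smul_smul, mul_comm]
    -- Reindexing the `B`-terms by the exponent of `A` costs only the coefficient `[n, n + 1] = 0`.
    have reindex : ∑ p ∈ antidiagonal n,
          (q ^ p.1 * qChoose q n p.1) • (A ^ p.1 * B ^ (p.2 + 1))
        = B ^ (n + 1) + ∑ p ∈ antidiagonal n,
          (q ^ (p.1 + 1) * qChoose q n (p.1 + 1)) • (A ^ (p.1 + 1) * B ^ p.2) := by
      have := (Finset.Nat.sum_antidiagonal_succ' (n := n)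
        (f := fun p ↦ (q ^ p.1 * qChoose q n p.1) • (A ^ p.1 * B ^ p.2))).symm.trans
        Finset.Nat.sum_antidiagonal_succ
      simpa [qChoose_eq_zero_of_lt q n.lt_succ_self] using this
    rw [pow_succ', ih, add_mul, Finset.mul_sum, Finset.mul_sum]
    simp only [hA, hB, reindex, Finset.Nat.sum_antidiagonal_succ, qChoose_succ_succ, add_smul,
      Finset.sum_add_distrib, qChoose_zero_right, pow_zero, one_mul, one_smul]
    exact add_left_comm _ _ _

theorem add_pow_of_pow_eq_one [CommRing R] [Algebra R E] {q : R}
    (h : QCommute q A B) {N : ℕ} (hN : N ≠ 0) (hq : q ^ N = 1)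
    (hq_primitive : ∀ l, l ≠ 0 → l < N → q ^ l - 1 ∈ nonZeroDivisors R) :
    (A + B) ^ N = A ^ N + B ^ N := by
  have inner_eq_zero (p : ℕ × ℕ) (hp : p ∈ antidiagonal N)
      (hne : p ≠ (N, 0) ∧ p ≠ (0, N)) : qChoose q N p.1 • (A ^ p.1 * B ^ p.2) = 0 := by
    obtain ⟨a, b⟩ := p
    have hab : a + b = N := mem_antidiagonal.mp hp
    have ha : a ≠ 0 := by rintro rfl; exact hne.2 (by simpa using hab)
    have hb : b ≠ 0 := by rintro rfl; exact hne.1 (by simpa using hab)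
    have haN : a < N := by lia
    rw [qChoose_eq_zero_of_pow_eq_one hq (hq_primitive a ha haN) ha haN, zero_smul]
  rw [h.add_pow,
    Finset.sum_eq_add_of_mem (N, 0) (0, N) (by simp) (by simp) (by simp [hN]) inner_eq_zero]
  simp

end QCommute

end QBinomial

section TensorDiff

variable {k : Type*} [CommRing k] {U V : ℤ → Type*}
  [∀ i, AddCommGroup (U i)] [∀ i, Module k (U i)]
  [∀ i, AddCommGroup (V i)] [∀ i, Module k (V i)]

variable (k U V) in
/-- The pure tensor `x ⊗ y` of `x : U r` and `y : V s`, viewed in the bigraded direct sum on which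
`tensorDiff` acts. Pure tensors span this sum, so they suffice to compare linear maps. -/
noncomputable def pureTensor (r s : ℤ) :
    U r →ₗ[k] V s →ₗ[k] ⨁ p : ℤ × ℤ, U p.1 ⊗[k] V p.2 :=
  (TensorProduct.mk k (U r) (V s)).compr₂
    (DirectSum.lof k (ℤ × ℤ) (fun p : ℤ × ℤ ↦ U p.1 ⊗[k] V p.2) (r, s))

theorem toModule_pureTensor {M : Type*} [AddCommMonoid M] [Module k M]
    (φ : ∀ p : ℤ × ℤ, U p.1 ⊗[k] V p.2 →ₗ[k] M) (r s : ℤ) (x : U r) (y : V s) :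
    DirectSum.toModule k (ℤ × ℤ) M φ (pureTensor k U V r s x y) = φ (r, s) (x ⊗ₜ[k] y) := by
  simp [pureTensor, DirectSum.toModule_lof]

theorem linearMap_ext_pureTensor {M : Type*} [AddCommMonoid M] [Module k M]
    {f g : (⨁ p : ℤ × ℤ, U p.1 ⊗[k] V p.2) →ₗ[k] M}
    (h : ∀ r s x y, f (pureTensor k U V r s x y) = g (pureTensor k U V r s x y)) : f = g :=
  DirectSum.linearMap_ext _ fun p ↦ TensorProduct.ext' (h p.1 p.2)

theorem pureTensor_castLM_left {r r' : ℤ} (h : r = r') (s : ℤ) (x : U r) (y : V s) :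
    pureTensor k U V r' s (castLM (k := k) h x) y = pureTensor k U V r s x y := by
  subst h; rfl

theorem pureTensor_castLM_right {s s' : ℤ} (h : s = s') (r : ℤ) (x : U r) (y : V s) :
    pureTensor k U V r s' x (castLM (k := k) h y) = pureTensor k U V r s x y := by
  subst h; rfl

section Left

variable (dU : ∀ i : ℤ, U i →ₗ[k] U (i + 1))

variable (V) in
/-- The summand `d_U ⊗ 1` of the differential `tensorDiff`. -/
noncomputable def tensorDiffLeft : Module.End k (⨁ p : ℤ × ℤ, U p.1 ⊗[k] V p.2) :=
  DirectSum.toModule k (ℤ × ℤ) _ fun p ↦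
    TensorProduct.lift ((pureTensor k U V (p.1 + 1) p.2).comp (dU p.1))

theorem tensorDiffLeft_pureTensor (r s : ℤ) (x : U r) (y : V s) :
    tensorDiffLeft V dU (pureTensor k U V r s x y)
      = pureTensor k U V (r + 1) s (dU r x) y :=
  toModule_pureTensor _ r s x y

theorem tensorDiffLeft_pow_pureTensor (n : ℕ) (r s : ℤ) (x : U r) (y : V s) :
    (tensorDiffLeft V dU ^ n) (pureTensor k U V r s x y)
      = pureTensor k U V (r + n) s (dpow dU n r x) y := by
  induction n generalizing r with
  | zero => simp [dpow, pureTensor_castLM_left]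
  | succ n ih =>
    rw [pow_succ, Module.End.mul_apply, tensorDiffLeft_pureTensor, ih, dpow,
      LinearMap.comp_apply, LinearMap.comp_apply, pureTensor_castLM_left]

theorem tensorDiffLeft_pow_eq_zero {N : ℕ} (hdU : ∀ i, dpow dU N i = 0) :
    tensorDiffLeft V dU ^ N = 0 :=
  linearMap_ext_pureTensor fun r s x y ↦ by simp [tensorDiffLeft_pow_pureTensor, hdU]

end Left

section Right

variable (u : kˣ) (dV : ∀ i : ℤ, V i →ₗ[k] V (i + 1))

variable (U) in
/-- The summand of the differential `tensorDiff` that applies `d_V` to the second factor, twisted by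
`u ^ r` on `U r ⊗ V s`. -/
noncomputable def tensorDiffRight : Module.End k (⨁ p : ℤ × ℤ, U p.1 ⊗[k] V p.2) :=
  DirectSum.toModule k (ℤ × ℤ) _ fun p ↦
    ((u ^ p.1 : kˣ) : k) • TensorProduct.lift ((pureTensor k U V p.1 (p.2 + 1)).compl₂ (dV p.2))

theorem tensorDiffRight_pureTensor (r s : ℤ) (x : U r) (y : V s) :
    tensorDiffRight U u dV (pureTensor k U V r s x y)
      = ((u ^ r : kˣ) : k) • pureTensor k U V r (s + 1) x (dV s y) :=
  toModule_pureTensor _ r s x y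

theorem tensorDiffRight_pow_pureTensor (n : ℕ) (r s : ℤ) (x : U r) (y : V s) :
    (tensorDiffRight U u dV ^ n) (pureTensor k U V r s x y)
      = ((u ^ r : kˣ) : k) ^ n • pureTensor k U V r (s + n) x (dpow dV n s y) := by
  induction n generalizing s with
  | zero => simp [dpow, pureTensor_castLM_right]
  | succ n ih =>
    rw [pow_succ, Module.End.mul_apply, tensorDiffRight_pureTensor, map_smul, ih, dpow,
      LinearMap.comp_apply, LinearMap.comp_apply, pureTensor_castLM_right, smul_smul, pow_succ']

theorem tensorDiffRight_pow_eq_zero {N : ℕ} (hdV : ∀ i, dpow dV N i = 0) :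
    tensorDiffRight U u dV ^ N = 0 :=
  linearMap_ext_pureTensor fun r s x y ↦ by simp [tensorDiffRight_pow_pureTensor, hdV]

end Right

variable (u : kˣ) (dU : ∀ i : ℤ, U i →ₗ[k] U (i + 1)) (dV : ∀ i : ℤ, V i →ₗ[k] V (i + 1))

theorem tensorDiff_pureTensor (r s : ℤ) (x : U r) (y : V s) :
    tensorDiff u U V dU dV (pureTensor k U V r s x y)
      = pureTensor k U V (r + 1) s (dU r x) y
        + ((u ^ r : kˣ) : k) • pureTensor k U V r (s + 1) x (dV s y) :=
  toModule_pureTensor _ r s x y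

theorem tensorDiff_eq_left_add_right :
    tensorDiff u U V dU dV = tensorDiffLeft V dU + tensorDiffRight U u dV :=
  linearMap_ext_pureTensor fun r s x y ↦ by
    rw [LinearMap.add_apply, tensorDiff_pureTensor, tensorDiffLeft_pureTensor,
      tensorDiffRight_pureTensor]

theorem qCommute_tensorDiffLeft_tensorDiffRight :
    QCommute (u : k) (tensorDiffLeft V dU) (tensorDiffRight U u dV) :=
  linearMap_ext_pureTensor fun r s x y ↦ by
    rw [Module.End.mul_apply, LinearMap.smul_apply, Module.End.mul_apply,
      tensorDiffLeft_pureTensor, tensorDiffRight_pureTensor, tensorDiffRight_pureTensor, map_smul,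
      tensorDiffLeft_pureTensor, smul_smul, zpow_add_one, Units.val_mul, mul_comm]

end TensorDiff

/-- if `U` and `V` are `N`-differential graded `k`-modules
(`d_U^{(N)} = 0` and `d_V^{(N)} = 0`), then the differential of the twisted tensor
product `U ⊗^{•q} V` also satisfies `d^{(N)} = 0`. -/
theorem tensorDiff_pow_N_eq_zero
    {k : Type*} [CommRing k] (N : ℕ) (hN : 2 ≤ N) (q : k)
    (hq1 : q ^ N = 1)
    (hq2 : ∀ l : ℕ, 1 ≤ l → l ≤ N - 1 → q ^ l - 1 ∈ nonZeroDivisors k)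
    (u : kˣ) (hu : (u : k) = q)
    (U V : ℤ → Type*) [∀ i, AddCommGroup (U i)] [∀ i, Module k (U i)]
    [∀ i, AddCommGroup (V i)] [∀ i, Module k (V i)]
    (dU : ∀ i : ℤ, U i →ₗ[k] U (i + 1)) (dV : ∀ i : ℤ, V i →ₗ[k] V (i + 1))
    (hdU : ∀ i : ℤ, dpow dU N i = 0) (hdV : ∀ i : ℤ, dpow dV N i = 0) :
    (tensorDiff u U V dU dV) ^ N = 0 := by
  subst hu
  have hAB := qCommute_tensorDiffLeft_tensorDiffRight u dU dV
  rw [tensorDiff_eq_left_add_right,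
    hAB.add_pow_of_pow_eq_one (by lia) hq1 fun l hl hlN ↦ hq2 l (by lia) (by lia),
    tensorDiffLeft_pow_eq_zero dU hdU, tensorDiffRight_pow_eq_zero u dV hdV, add_zero]
end

section
/- Let k be a commutative ring with unity, N ≥ 2 an integer, q ∈ k a primitive N-th root of unity, and U, V, W k-modules with k-linear endomorphisms d_U, d_V, d_W respectively. For s ∈ ℤ let D_s be the operator on Hom_k(U,V) given by D_s(g) = d_V∘g − q^s·(g∘d_U), and let E_s be the operator on Hom_k(U,W) given by E_s(h) = d_W∘h − q^s·(h∘d_U). Let m, n ∈ ℤ and let G : V → W be a k-linear map satisfying d_W∘G = q^n·(G∘d_V). Then for every k-linear F' : U → V: G ∘ (D_{m−1}∘D_{m−2}∘⋯∘D_{m+1−N})(F') = q^n · (E_{m+n−1}∘E_{m+n−2}∘⋯∘E_{m+n+1−N})(G∘F'). (That is, composing an (N−1)-fold boundary of the Hom-complex with a cycle of degree n again yields an (N−1)-fold boundary.) -/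
/-!
A cycle `G` of degree `n` carries a differential of degree `s` to one of degree `s + n`, at the
cost of a factor `q ^ n`. A composite of `N - 1` differentials thus costs `q ^ (n * (N - 1))`, which
is `q ^ (-n)` because `q ^ N = 1`.
-/

section

variable {k U V W : Type*} [CommRing k] [AddCommGroup U] [AddCommGroup V] [AddCommGroup W]
  [Module k U] [Module k V] [Module k W]

theorem homDiff_smul (u : kˣ) (dU : U →ₗ[k] U) (dV : V →ₗ[k] V) (s : ℤ) (c : k)
    (g : U →ₗ[k] V) : homDiff u dU dV s (c • g) = c • homDiff u dU dV s g := by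
  simp only [homDiff, LinearMap.comp_smul, LinearMap.smul_comp, smul_sub, smul_comm c]

variable {u : kˣ} {dV : V →ₗ[k] V} {dW : W →ₗ[k] W} {n : ℤ} {G : V →ₗ[k] W}

theorem homDiff_comp (dU : U →ₗ[k] U) (hG : dW ∘ₗ G = ((u ^ n : kˣ) : k) • (G ∘ₗ dV))
    (s : ℤ) (g : U →ₗ[k] V) :
    homDiff u dU dW (s + n) (G ∘ₗ g) = ((u ^ n : kˣ) : k) • (G ∘ₗ homDiff u dU dV s g) := by
  calc homDiff u dU dW (s + n) (G ∘ₗ g)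
      = (dW ∘ₗ G) ∘ₗ g - ((u ^ (s + n) : kˣ) : k) • (G ∘ₗ g ∘ₗ dU) := rfl
    _ = ((u ^ n : kˣ) : k) • (G ∘ₗ dV ∘ₗ g) -
          ((u ^ n : kˣ) : k) • ((u ^ s : kˣ) : k) • (G ∘ₗ g ∘ₗ dU) := by
        rw [hG, LinearMap.smul_comp, LinearMap.comp_assoc, add_comm s n, zpow_add, Units.val_mul,
          mul_smul]
    _ = ((u ^ n : kˣ) : k) • (G ∘ₗ homDiff u dU dV s g) := by
        rw [homDiff, LinearMap.comp_sub, LinearMap.comp_smul, smul_sub]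

theorem foldl_homDiff_comp {ι : Type*} {s t : ι → ℤ} (dU : U →ₗ[k] U)
    (hG : dW ∘ₗ G = ((u ^ n : kˣ) : k) • (G ∘ₗ dV)) (hst : ∀ i, t i = s i + n) (l : List ι)
    (g : U →ₗ[k] V) :
    l.foldl (fun h i => homDiff u dU dW (t i) h) (G ∘ₗ g) =
      (((u ^ n) ^ l.length : kˣ) : k) • (G ∘ₗ l.foldl (fun f i => homDiff u dU dV (s i) f) g) := by
  induction l using List.reverseRecOn with
  | nil => simp
  | append_singleton l i ih =>
    simp only [List.foldl_concat, List.length_append, List.length_singleton]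
    rw [ih, homDiff_smul, hst, homDiff_comp dU hG, smul_smul, ← Units.val_mul, ← pow_succ]

theorem comp_homDiff_iterate_general {ι : Type*} {s t : ι → ℤ} (dU : U →ₗ[k] U)
    (hG : dW ∘ₗ G = ((u ^ n : kˣ) : k) • (G ∘ₗ dV)) (hst : ∀ i, t i = s i + n) {l : List ι}
    (hu : u ^ (l.length + 1) = 1) (g : U →ₗ[k] V) :
    G ∘ₗ l.foldl (fun f i => homDiff u dU dV (s i) f) g =
      ((u ^ n : kˣ) : k) • l.foldl (fun h i => homDiff u dU dW (t i) h) (G ∘ₗ g) := by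
  have hun : (u ^ n) ^ (l.length + 1) = 1 := by
    rw [← zpow_natCast, zpow_comm, zpow_natCast, hu, one_zpow]
  rw [foldl_homDiff_comp dU hG hst, smul_smul, ← Units.val_mul, ← pow_succ', hun, Units.val_one,
    one_smul]

end

/-- if `G : V → W` satisfies `d_W∘G = q^n ⬝ (G∘d_V)` (a cycle of degree `n`),
then for any `F' : U → V`,
`G ∘ (D_{m−1}∘⋯∘D_{m+1−N})(F') = q^n ⬝ (E_{m+n−1}∘⋯∘E_{m+n+1−N})(G∘F')`,
where `D_s` (resp. `E_s`) is the degree-`s` differential of `Hom^{•q}(U,V)`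
(resp. `Hom^{•q}(U,W)`). -/
theorem comp_homDiff_iterate
    {k : Type*} [CommRing k] (N : ℕ) (hN : 2 ≤ N) (q : k)
    (hq1 : q ^ N = 1)
    (hq2 : ∀ l : ℕ, 1 ≤ l → l ≤ N - 1 → q ^ l - 1 ∈ nonZeroDivisors k)
    (u : kˣ) (hu : (u : k) = q)
    {U V W : Type*} [AddCommGroup U] [AddCommGroup V] [AddCommGroup W]
    [Module k U] [Module k V] [Module k W]
    (dU : U →ₗ[k] U) (dV : V →ₗ[k] V) (dW : W →ₗ[k] W)
    (m n : ℤ) (G : V →ₗ[k] W) (hG : dW ∘ₗ G = ((u ^ n : kˣ) : k) • (G ∘ₗ dV))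
    (F' : U →ₗ[k] V) :
    G ∘ₗ ((List.range (N - 1)).foldl
        (fun g i => homDiff u dU dV (m + 1 - (N : ℤ) + (i : ℤ)) g) F') =
      ((u ^ n : kˣ) : k) • ((List.range (N - 1)).foldl
        (fun h i => homDiff u dU dW (m + n + 1 - (N : ℤ) + (i : ℤ)) h) (G ∘ₗ F')) := by
  have huN : u ^ (N - 1 + 1) = 1 := by ext; simp [Nat.sub_add_cancel (by omega : 1 ≤ N), hu, hq1]
  exact comp_homDiff_iterate_general dU hG (fun _ => by ring) (by simpa using huN) F'
end
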